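/- Let θ > 0, let W be a nonnegative real random variable with finite mean, and let W* have the law of U^{1/θ}·(W+1) where U is uniform on [0,1] and independent of W. Let D_θ be a random variable whose law is the unique fixed point of this transformation (the generalized Dickman distribution). Then the Wasserstein-1 distance satisfies d_1(W, D_θ) ≤ (1+θ)·d_1(W, W*). -/

import Mathlib

open MeasureTheory ProbabilityTheory

/-- The Wasserstein-1 distance between two laws on `ℝ`, defined as the supremum over
1-Lipschitz test functions of the difference of their expectations. -/
noncomputable def d1 (μ ν : Measure ℝ) : ℝ :=
  ⨆ h : {h : ℝ → ℝ // LipschitzWith 1 h}, |∫ x, h.1 x ∂μ - ∫ x, h.1 x ∂ν|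

/-- A 1-Lipschitz function composed with an integrable function is integrable. -/
theorem LipschitzWith.integrable_comp_of_isFiniteMeasure {α : Type*} [MeasurableSpace α]
    {μ : Measure α} [IsFiniteMeasure μ] {h : ℝ → ℝ} (hh : LipschitzWith 1 h) {f : α → ℝ}
    (hf : Integrable f μ) : Integrable (fun a => h (f a)) μ := by
  refine (hf.norm.add (integrable_const |h 0|)).mono'
    (hh.continuous.comp_aestronglyMeasurable hf.aestronglyMeasurable) (ae_of_all _ fun a => ?_)
  have hdist := hh.dist_le_mul (f a) 0
  simp only [Real.dist_eq, NNReal.coe_one, one_mul, sub_zero] at hdist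
  simp only [Pi.add_apply, Real.norm_eq_abs]
  linarith [abs_sub_abs_le_abs_sub (h (f a)) (h 0)]

/-- The test-function differences defining `d1` are bounded when both laws have finite mean. -/
theorem bddAbove_d1 {μ ν : Measure ℝ} [IsProbabilityMeasure μ] [IsProbabilityMeasure ν]
    (hμ : Integrable (fun x => x) μ) (hν : Integrable (fun x => x) ν) :
    BddAbove (Set.range fun h : {h : ℝ → ℝ // LipschitzWith 1 h} =>
      |∫ x, h.1 x ∂μ - ∫ x, h.1 x ∂ν|) := by
  refine ⟨∫ x, |x| ∂μ + ∫ x, |x| ∂ν, ?_⟩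
  rintro _ ⟨⟨h, hh⟩, rfl⟩
  have centered {κ : Measure ℝ} [IsProbabilityMeasure κ] (hκ : Integrable (fun x => x) κ) :
      |∫ x, h x ∂κ - h 0| ≤ ∫ x, |x| ∂κ := by
    have hsub : ∫ x, h x ∂κ - h 0 = ∫ x, (h x - h 0) ∂κ := by
      rw [integral_sub (hh.integrable_comp_of_isFiniteMeasure hκ) (integrable_const _)]
      simp
    rw [hsub]
    rw [← Real.norm_eq_abs]
    refine norm_integral_le_of_norm_le hκ.abs (ae_of_all _ fun x => ?_)
    simpa [Real.dist_eq] using hh.dist_le_mul x 0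
  calc |∫ x, h x ∂μ - ∫ x, h x ∂ν|
      ≤ |∫ x, h x ∂μ - h 0| + |h 0 - ∫ x, h x ∂ν| := abs_sub_le _ _ _
    _ ≤ _ := add_le_add (centered hμ) (abs_sub_comm (h 0) _ ▸ centered hν)

/-- A `c`-Lipschitz function has expectations differing by at most `c` times `d1`. -/
theorem abs_integral_sub_le_mul_d1 {μ ν : Measure ℝ} [IsProbabilityMeasure μ]
    [IsProbabilityMeasure ν] (hμ : Integrable (fun x => x) μ) (hν : Integrable (fun x => x) ν)
    {c : ℝ} (hc : 0 < c) {g : ℝ → ℝ} (hg : ∀ x y, |g x - g y| ≤ c * |x - y|) :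
    |∫ x, g x ∂μ - ∫ x, g x ∂ν| ≤ c * d1 μ ν := by
  have hlip : LipschitzWith 1 fun x => c⁻¹ * g x := by
    refine LipschitzWith.of_dist_le_mul fun x y => ?_
    rw [Real.dist_eq, Real.dist_eq, ← mul_sub, abs_mul, abs_of_pos (inv_pos.2 hc),
      inv_mul_le_iff₀ hc]
    simpa using hg x y
  have hle := le_ciSup (bddAbove_d1 hμ hν) ⟨_, hlip⟩
  simp only [integral_const_mul, ← mul_sub, abs_mul, abs_of_pos (inv_pos.2 hc)] at hle
  exact (inv_mul_le_iff₀ hc).1 hle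

/-- The expectation of `h (U ^ p * (x + 1))` for `U` uniform on `[0, 1]`. -/
noncomputable def uniformPowerAverage (p : ℝ) (h : ℝ → ℝ) (x : ℝ) : ℝ :=
  ∫ u in Set.Icc (0 : ℝ) 1, h (u ^ p * (x + 1))

theorem abs_uniformPowerAverage_sub_le {p : ℝ} (hp : 0 < p) {h : ℝ → ℝ}
    (hh : LipschitzWith 1 h) (x y : ℝ) :
    |uniformPowerAverage p h x - uniformPowerAverage p h y| ≤ (p + 1)⁻¹ * |x - y| := by
  have hcont : Continuous fun u : ℝ => u ^ p := Real.continuous_rpow_const hp.le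
  have hint (z : ℝ) : IntegrableOn (fun u : ℝ => h (u ^ p * (z + 1))) (Set.Icc 0 1) :=
    (hh.continuous.comp (hcont.mul continuous_const)).continuousOn.integrableOn_Icc
  have hval : ∫ u in Set.Icc (0 : ℝ) 1, u ^ p * |x - y| = (p + 1)⁻¹ * |x - y| := by
    rw [integral_mul_const, integral_Icc_eq_integral_Ioc,
      ← intervalIntegral.integral_of_le zero_le_one, integral_rpow (Or.inl (by linarith)),
      Real.one_rpow, Real.zero_rpow (by positivity), sub_zero, one_div]
  rw [uniformPowerAverage, uniformPowerAverage, ← integral_sub (hint x) (hint y), ← hval,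
    ← Real.norm_eq_abs]
  refine norm_integral_le_of_norm_le
    (ContinuousOn.integrableOn_Icc (hcont.mul continuous_const).continuousOn) ?_
  filter_upwards [ae_restrict_mem measurableSet_Icc] with u hu
  have hdist := hh.dist_le_mul (u ^ p * (x + 1)) (u ^ p * (y + 1))
  rw [Real.dist_eq, Real.dist_eq, NNReal.coe_one, one_mul, ← mul_sub, add_sub_add_right_eq_sub,
    abs_mul, abs_of_nonneg (Real.rpow_nonneg hu.1 p)] at hdist
  exact hdist

section Transform

variable {Ω : Type*} [MeasurableSpace Ω] {P : Measure Ω} [IsProbabilityMeasure P] {p : ℝ}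
  {U X : Ω → ℝ}

theorem integrable_uniform_rpow_mul_add_one (hp : 0 < p) (hX : Measurable X)
    (hXint : Integrable X P) (hU : Measurable U)
    (hUunif : Measure.map U P = volume.restrict (Set.Icc (0 : ℝ) 1)) :
    Integrable (fun ω => U ω ^ p * (X ω + 1)) P := by
  have hUmem : ∀ᵐ ω ∂P, U ω ∈ Set.Icc (0 : ℝ) 1 := by
    refine ae_of_ae_map hU.aemeasurable ?_
    rw [hUunif]
    exact ae_restrict_mem measurableSet_Icc
  refine (hXint.add (integrable_const (1 : ℝ))).norm.mono'
    ((hU.pow_const p).mul (hX.add_const 1)).aestronglyMeasurable ?_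
  filter_upwards [hUmem] with ω hω
  rw [norm_mul, Real.norm_of_nonneg (Real.rpow_nonneg hω.1 p)]
  exact mul_le_of_le_one_left (norm_nonneg _) (Real.rpow_le_one hω.1 hω.2 hp.le)

theorem integral_map_uniform_rpow_mul_add_one (hp : 0 < p) (hX : Measurable X)
    (hXint : Integrable X P) (hU : Measurable U)
    (hUunif : Measure.map U P = volume.restrict (Set.Icc (0 : ℝ) 1)) (hind : IndepFun U X P)
    {h : ℝ → ℝ} (hh : LipschitzWith 1 h) :
    ∫ y, h y ∂(Measure.map (fun ω => U ω ^ p * (X ω + 1)) P)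
      = ∫ x, uniformPowerAverage p h x ∂(Measure.map X P) := by
  have hpair : Measurable fun ω => (U ω, X ω) := hU.prodMk hX
  have hmeas : Measurable fun z : ℝ × ℝ => h (z.1 ^ p * (z.2 + 1)) :=
    hh.continuous.measurable.comp ((measurable_fst.pow_const p).mul (measurable_snd.add_const 1))
  have hlaw := (indepFun_iff_map_prod_eq_prod_map_map hU.aemeasurable hX.aemeasurable).1 hind
  have : IsProbabilityMeasure (Measure.map X P) := Measure.isProbabilityMeasure_map hX.aemeasurable
  have hint : Integrable (fun z : ℝ × ℝ => h (z.1 ^ p * (z.2 + 1)))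
      ((volume.restrict (Set.Icc (0 : ℝ) 1)).prod (Measure.map X P)) := by
    rw [← hUunif, ← hlaw, integrable_map_measure hmeas.aestronglyMeasurable hpair.aemeasurable]
    exact hh.integrable_comp_of_isFiniteMeasure
      (integrable_uniform_rpow_mul_add_one hp hX hXint hU hUunif)
  calc ∫ y, h y ∂(Measure.map (fun ω => U ω ^ p * (X ω + 1)) P)
      = ∫ ω, h (U ω ^ p * (X ω + 1)) ∂P :=
        integral_map ((hU.pow_const p).mul (hX.add_const 1)).aemeasurable
          hh.continuous.aestronglyMeasurable
    _ = ∫ z, h (z.1 ^ p * (z.2 + 1)) ∂(Measure.map (fun ω => (U ω, X ω)) P) :=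
        (integral_map hpair.aemeasurable hmeas.aestronglyMeasurable).symm
    _ = _ := by
        rw [hlaw, hUunif, integral_prod_symm _ hint]
        rfl

end Transform

theorem stmt_14 {Ω : Type*} [MeasureSpace Ω] [IsProbabilityMeasure (ℙ : Measure Ω)]
    (θ : ℝ) (hθ : 0 < θ)
    (W : Ω → ℝ) (hWmeas : Measurable W) (hWpos : ∀ ω, 0 ≤ W ω) (hWint : Integrable W)
    (U : Ω → ℝ) (hUmeas : Measurable U)
    (hUunif : Measure.map U ℙ = volume.restrict (Set.Icc (0:ℝ) 1))
    (hindep : IndepFun U W)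
    {Ω' : Type*} [MeasureSpace Ω'] [IsProbabilityMeasure (ℙ : Measure Ω')]
    (D : Ω' → ℝ) (hDmeas : Measurable D) (hDpos : ∀ ω, 0 ≤ D ω) (hDint : Integrable D)
    (V : Ω' → ℝ) (hVmeas : Measurable V)
    (hVunif : Measure.map V ℙ = volume.restrict (Set.Icc (0:ℝ) 1))
    (hindep' : IndepFun V D)
    -- `D` has the generalized Dickman distribution: it is a fixed point of the transform
    (hfix : Measure.map (fun ω => V ω ^ (1 / θ) * (D ω + 1)) ℙ = Measure.map D ℙ) :
    d1 (Measure.map W ℙ) (Measure.map D ℙ)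
      ≤ (1 + θ) * d1 (Measure.map W ℙ)
          (Measure.map (fun ω => U ω ^ (1 / θ) * (W ω + 1)) ℙ) := by
  have hp : 0 < 1 / θ := by positivity
  have hWstar : Measurable fun ω => U ω ^ (1 / θ) * (W ω + 1) :=
    (hUmeas.pow_const _).mul (hWmeas.add_const 1)
  have : IsProbabilityMeasure (Measure.map W ℙ) :=
    Measure.isProbabilityMeasure_map hWmeas.aemeasurable
  have : IsProbabilityMeasure (Measure.map D ℙ) :=
    Measure.isProbabilityMeasure_map hDmeas.aemeasurable
  have : IsProbabilityMeasure (Measure.map (fun ω => U ω ^ (1 / θ) * (W ω + 1)) ℙ) :=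
    Measure.isProbabilityMeasure_map hWstar.aemeasurable
  have hWid : Integrable (fun x : ℝ => x) (Measure.map W ℙ) :=
    (integrable_map_measure aestronglyMeasurable_id hWmeas.aemeasurable).2 hWint
  have hDid : Integrable (fun x : ℝ => x) (Measure.map D ℙ) :=
    (integrable_map_measure aestronglyMeasurable_id hDmeas.aemeasurable).2 hDint
  have hWstarid : Integrable (fun x : ℝ => x)
      (Measure.map (fun ω => U ω ^ (1 / θ) * (W ω + 1)) ℙ) :=
    (integrable_map_measure aestronglyMeasurable_id hWstar.aemeasurable).2
      (integrable_uniform_rpow_mul_add_one hp hWmeas hWint hUmeas hUunif)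
  have hcontract : d1 (Measure.map W ℙ) (Measure.map D ℙ)
      ≤ d1 (Measure.map W ℙ) (Measure.map (fun ω => U ω ^ (1 / θ) * (W ω + 1)) ℙ)
        + (1 / θ + 1)⁻¹ * d1 (Measure.map W ℙ) (Measure.map D ℙ) := by
    have : Nonempty {h : ℝ → ℝ // LipschitzWith 1 h} := ⟨⟨id, LipschitzWith.id⟩⟩
    refine ciSup_le fun ⟨h, hh⟩ => ?_
    refine (abs_sub_le _ (∫ x, h x ∂(Measure.map (fun ω => U ω ^ (1 / θ) * (W ω + 1)) ℙ)) _).trans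
      (add_le_add (le_ciSup (bddAbove_d1 hWid hWstarid) ⟨h, hh⟩) ?_)
    have hDavg := integral_map_uniform_rpow_mul_add_one hp hDmeas hDint hVmeas hVunif hindep' hh
    rw [hfix] at hDavg
    rw [integral_map_uniform_rpow_mul_add_one hp hWmeas hWint hUmeas hUunif hindep hh, hDavg]
    exact abs_integral_sub_le_mul_d1 hWid hDid (by positivity)
      (abs_uniformPowerAverage_sub_le hp hh)
  have hratio : (1 / θ + 1)⁻¹ = θ / (1 + θ) := by field_simp
  rw [hratio, ← sub_le_iff_le_add] at hcontract
  calc d1 (Measure.map W ℙ) (Measure.map D ℙ)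
      = (1 + θ) * (d1 (Measure.map W ℙ) (Measure.map D ℙ)
          - θ / (1 + θ) * d1 (Measure.map W ℙ) (Measure.map D ℙ)) := by
        field_simp
        ring
    _ ≤ _ := mul_le_mul_of_nonneg_left hcontract (by positivity)
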